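/- Let d ∈ ℕ with d ≥ 1, let Σ be a symmetric positive definite d × d real matrix, and for μ ∈ ℝ^d let N(y; μ, Σ) = ((2π)^d det Σ)^{-1/2} exp(−(1/2)(y − μ)^T Σ^{-1}(y − μ)). Let μ_1, …, μ_N ∈ ℝ^d and α_1, …, α_N ≥ 0 with Σ_{l=1}^N α_l = 1, and define the mixture density m(y) = Σ_{l=1}^N α_l N(y; μ_l, Σ). Then for each index i, the Kullback–Leibler divergence of the Gaussian component from the mixture is bounded below by the closed-form approximation used in the expected information gain: ∫_{ℝ^d} N(y; μ_i, Σ) · ln( N(y; μ_i, Σ) / m(y) ) dy ≥ c − ln( Σ_{l=1}^N α_l Z_{i,l} ), where c = −(1/2)( ln((2π)^d det Σ) + d ) and Z_{i,l} = ((2π)^d det(2Σ))^{-1/2} exp(−(1/2)(μ_i − μ_l)^T (2Σ)^{-1} (μ_i − μ_l)). -/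

import Mathlib

open MeasureTheory Real Matrix

/-- The multivariate Gaussian density with mean `μ` and covariance `S`. -/
noncomputable def gaussDensity (d : ℕ) (S : Matrix (Fin d) (Fin d) ℝ)
    (μ y : Fin d → ℝ) : ℝ :=
  ((2 * π) ^ d * S.det) ^ (-(1/2) : ℝ) *
    Real.exp (-(1/2) * ((y - μ) ⬝ᵥ (S⁻¹ *ᵥ (y - μ))))

/-!
Under the law `γ` of the `i`-th component, with density `p`, the divergence is
`𝔼 log p - 𝔼 log m`. Whitening `γ` to the standard Gaussian gives `𝔼 log p = c`, and Jensen's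
inequality gives `𝔼 log m ≤ log 𝔼 m`. By the parallelogram law the product of two Gaussian densities
with covariance `S` is a constant times a Gaussian density with covariance `S / 2`. This constant
is `Z i l`, so `𝔼 m = ∑ l, α l * Z i l`. Finally `log m` is `γ`-integrable because it lies between
the logarithm of a single weighted component and `m` itself.
-/

section Jensen

variable {X : Type*} [MeasurableSpace X] {P : Measure X} {f g : X → ℝ}

lemma integral_pos_of_ae_pos [NeZero P] (hf_pos : ∀ᵐ x ∂P, 0 < f x) (hf : Integrable f P) :
    0 < ∫ x, f x ∂P := by
  have support_ae : Function.support f =ᵐ[P] Set.univ :=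
    Filter.eventuallyEq_univ.mpr (hf_pos.mono fun _ hx => hx.ne')
  rw [integral_pos_iff_support_of_nonneg_ae (hf_pos.mono fun _ hx => hx.le) hf,
    measure_congr support_ae]
  exact Measure.measure_univ_pos.mpr (NeZero.ne P)

lemma integral_log_le_log_integral [IsProbabilityMeasure P] (hf_pos : ∀ᵐ x ∂P, 0 < f x)
    (hf : Integrable f P) (hlog : Integrable (fun x => log (f x)) P) :
    ∫ x, log (f x) ∂P ≤ log (∫ x, f x ∂P) := by
  set K := ∫ x, f x ∂P
  have hK : 0 < K := integral_pos_of_ae_pos hf_pos hf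
  have tangent : ∀ᵐ x ∂P, log (f x) ≤ f x / K - 1 + log K := by
    filter_upwards [hf_pos] with x hx
    have := log_le_sub_one_of_pos (div_pos hx hK)
    rw [log_div hx.ne' hK.ne'] at this
    linarith
  calc ∫ x, log (f x) ∂P ≤ ∫ x, (f x / K - 1 + log K) ∂P :=
        integral_mono_ae hlog (by fun_prop) tangent
    _ = log K := by
        rw [integral_add (by fun_prop) (by fun_prop), integral_sub (by fun_prop) (by fun_prop),
          integral_div]
        simp [K, div_self hK.ne']

lemma integrable_log_of_le (hg_pos : ∀ᵐ x ∂P, 0 < g x) (hgf : g ≤ᵐ[P] f)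
    (hf : Integrable f P) (hlog : Integrable (fun x => log (g x)) P) :
    Integrable (fun x => log (f x)) P := by
  refine integrable_of_le_of_le
    (measurable_log.comp_aemeasurable hf.aemeasurable).aestronglyMeasurable ?_ ?_ hlog hf
  · filter_upwards [hg_pos, hgf] with x hg hle using log_le_log hg hle
  · filter_upwards [hg_pos, hgf] with x hg hle using log_le_self (hg.le.trans hle)

end Jensen

lemma pi_withDensity_ofReal {ι : Type*} [Fintype ι] {X : ι → Type*} [∀ i, MeasurableSpace (X i)]
    {μ : ∀ i, Measure (X i)} [∀ i, SigmaFinite (μ i)] {f : ∀ i, X i → ℝ}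
    (hf_nonneg : ∀ i x, 0 ≤ f i x) (hf : ∀ i, Integrable (f i) (μ i)) :
    Measure.pi (fun i => (μ i).withDensity fun x => ENNReal.ofReal (f i x)) =
      (Measure.pi μ).withDensity fun x => ENNReal.ofReal (∏ i, f i (x i)) := by
  refine Measure.pi_eq fun s hs => ?_
  have hf_restrict (i : ι) : Integrable (f i) ((μ i).restrict (s i)) := (hf i).restrict
  rw [withDensity_apply _ (.univ_pi hs), Measure.restrict_pi_pi,
    ← ofReal_integral_eq_lintegral_ofReal (.fintype_prod_dep hf_restrict)
      (ae_of_all _ fun x => Finset.prod_nonneg fun i _ => hf_nonneg i (x i)),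
    integral_fintype_prod_eq_prod,
    ENNReal.ofReal_prod_of_nonneg fun i _ => integral_nonneg (hf_nonneg i)]
  refine Finset.prod_congr rfl fun i _ => ?_
  rw [withDensity_apply _ (hs i),
    ofReal_integral_eq_lintegral_ofReal (hf_restrict i) (ae_of_all _ (hf_nonneg i))]

lemma map_mulVec_sub_volume {n : Type*} [Fintype n] [DecidableEq n] {B : Matrix n n ℝ}
    (hB : IsUnit B.det) (μ : n → ℝ) :
    Measure.map (fun y => B *ᵥ (y - μ)) volume = ENNReal.ofReal |B.det⁻¹| • volume := by
  have map_comp : Measure.map (fun y => B *ᵥ (y - μ)) volume =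
      Measure.map (toLin' B) (Measure.map (fun y => y - μ) volume) :=
    (Measure.map_map (LinearMap.continuous_on_pi (toLin' B)).measurable (by fun_prop)).symm
  rw [map_comp, (measurePreserving_sub_right volume μ).map_eq,
    Real.map_matrix_volume_pi_eq_smul_volume_pi hB.ne_zero]

section QuadraticForm

variable {n : Type*} [Fintype n]

lemma dotProduct_mulVec_parallelogram (A : Matrix n n ℝ) (u v : n → ℝ) :
    (u + v) ⬝ᵥ (A *ᵥ (u + v)) + (u - v) ⬝ᵥ (A *ᵥ (u - v)) =
      2 * (u ⬝ᵥ (A *ᵥ u) + v ⬝ᵥ (A *ᵥ v)) := by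
  simp only [mulVec_add, mulVec_sub, add_dotProduct, sub_dotProduct, dotProduct_add,
    dotProduct_sub]
  ring

lemma dotProduct_transpose_mul_self_mulVec (B : Matrix n n ℝ) (v : n → ℝ) :
    v ⬝ᵥ ((Bᵀ * B) *ᵥ v) = (B *ᵥ v) ⬝ᵥ (B *ᵥ v) := by
  rw [← mulVec_mulVec, dotProduct_mulVec, vecMul_transpose]

open scoped MatrixOrder in
lemma exists_eq_transpose_mul_self_inv [DecidableEq n] {S : Matrix n n ℝ} (hS : S.PosDef) :
    ∃ B : Matrix n n ℝ, IsUnit B.det ∧ S = (Bᵀ * B)⁻¹ := by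
  obtain ⟨B, hB, hSB⟩ :=
    CStarAlgebra.isStrictlyPositive_iff_eq_star_mul_self.mp hS.inv.isStrictlyPositive
  refine ⟨B, (isUnit_iff_isUnit_det B).mp hB, ?_⟩
  rw [← conjTranspose_eq_transpose_of_trivial, ← star_eq_conjTranspose, ← hSB,
    nonsing_inv_nonsing_inv _ hS.det_pos.ne'.isUnit]

end QuadraticForm

section StandardGaussian

open ProbabilityTheory

lemma integral_sq_gaussianReal_zero (v : NNReal) : ∫ x, x ^ 2 ∂gaussianReal 0 v = v := by
  simpa [variance_of_integral_eq_zero aemeasurable_id] using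
    variance_id_gaussianReal (μ := 0) (v := v)

lemma integrable_add_const_sq_gaussianReal (m : ℝ) (v : NNReal) (a : ℝ) :
    Integrable (fun x => (x + a) ^ 2) (gaussianReal m v) :=
  ((memLp_id_gaussianReal 2).add (memLp_const a)).integrable_sq

variable {n : Type*} [Fintype n]

lemma integrable_dotProduct_add_const_pi_gaussianReal (v : n → ℝ) :
    Integrable (fun x => (x + v) ⬝ᵥ (x + v)) (Measure.pi fun _ : n => gaussianReal 0 1) := by
  simp only [dotProduct, ← sq]
  exact integrable_finsetSum _ fun k _ =>
    integrable_comp_eval (μ := fun _ : n => gaussianReal 0 1)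
      (integrable_add_const_sq_gaussianReal 0 1 (v k))

lemma integral_dotProduct_self_pi_gaussianReal :
    ∫ x, x ⬝ᵥ x ∂(Measure.pi fun _ : n => gaussianReal 0 1) = Fintype.card n := by
  have integrable_sq : Integrable (fun x : ℝ => x ^ 2) (gaussianReal 0 1) := by
    simpa using integrable_add_const_sq_gaussianReal 0 1 0
  simp only [dotProduct, ← sq]
  rw [integral_finsetSum _ fun k _ =>
    integrable_comp_eval (μ := fun _ : n => gaussianReal 0 1) integrable_sq]
  simp [integral_comp_eval (μ := fun _ : n => gaussianReal 0 1)
    integrable_sq.aestronglyMeasurable, integral_sq_gaussianReal_zero]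

end StandardGaussian

section GaussDensity

variable {d : ℕ} {S : Matrix (Fin d) (Fin d) ℝ}

lemma gaussDensity_pos (hS : 0 < S.det) (μ y : Fin d → ℝ) : 0 < gaussDensity d S μ y := by
  unfold gaussDensity
  positivity

lemma continuous_gaussDensity (S : Matrix (Fin d) (Fin d) ℝ) (μ : Fin d → ℝ) :
    Continuous (gaussDensity d S μ) := by
  unfold gaussDensity
  fun_prop

lemma log_gaussDensity (hS : 0 < S.det) (μ y : Fin d → ℝ) :
    log (gaussDensity d S μ y) =
      -(1 / 2) * (log ((2 * π) ^ d * S.det) + (y - μ) ⬝ᵥ (S⁻¹ *ᵥ (y - μ))) := by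
  unfold gaussDensity
  rw [log_mul (by positivity) (by positivity), log_exp, log_rpow (by positivity)]
  ring

lemma gaussDensity_mul_gaussDensity (hS : 0 < S.det) (a b y : Fin d → ℝ) :
    gaussDensity d S a y * gaussDensity d S b y =
      gaussDensity d ((2 : ℝ) • S) b a *
        gaussDensity d ((2⁻¹ : ℝ) • S) (midpoint ℝ a b) y := by
  have inv_smul_S {t : ℝ} (ht : t ≠ 0) : (t • S)⁻¹ = t⁻¹ • S⁻¹ :=
    inv_smul' S (Units.mk0 t ht) hS.ne'.isUnit
  have hy : y - midpoint ℝ a b = (2⁻¹ : ℝ) • ((y - a) + (y - b)) := by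
    rw [midpoint_eq_smul_add, invOf_eq_inv]
    module
  have hab : a - b = (y - b) - (y - a) := by abel
  have quadratic := dotProduct_mulVec_parallelogram S⁻¹ (y - b) (y - a)
  have hdet : (2 * π) ^ d * S.det * ((2 * π) ^ d * S.det) =
      (2 * π) ^ d * ((2 : ℝ) • S).det * ((2 * π) ^ d * ((2⁻¹ : ℝ) • S).det) := by
    simp only [det_smul, Fintype.card_fin, inv_pow]
    field_simp
  have hS₂ : 0 < ((2 : ℝ) • S).det := by rw [det_smul]; positivity
  have hS_half : 0 < ((2⁻¹ : ℝ) • S).det := by rw [det_smul]; positivity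
  unfold gaussDensity
  rw [mul_mul_mul_comm, mul_mul_mul_comm (((2 * π) ^ d * ((2 : ℝ) • S).det) ^ _),
    ← exp_add, ← exp_add, ← mul_rpow (by positivity) (by positivity),
    ← mul_rpow (by positivity) (by positivity), hdet, inv_smul_S two_ne_zero,
    inv_smul_S (by norm_num), hy, hab, add_comm (y - a)]
  simp only [smul_mulVec, mulVec_smul, dotProduct_smul, smul_dotProduct, smul_eq_mul]
  congr 2
  linear_combination (1 / 4) * quadratic

lemma gaussDensity_one_zero_eq_prod (x : Fin d → ℝ) :
    gaussDensity d 1 0 x = ∏ j, ProbabilityTheory.gaussianPDFReal 0 1 (x j) := by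
  have normalization : ((2 * π) ^ d) ^ (-(1 / 2) : ℝ) = (√(2 * π))⁻¹ ^ d := by
    rw [← rpow_pow_comm (by positivity), rpow_neg (by positivity), ← sqrt_eq_rpow]
  simp only [gaussDensity, ProbabilityTheory.gaussianPDFReal, Finset.prod_mul_distrib, ← exp_sum,
    det_one, mul_one, normalization, inv_one, one_mulVec, sub_zero, NNReal.coe_one,
    Finset.prod_const, Finset.card_univ, Fintype.card_fin, dotProduct, Finset.mul_sum]
  congr! 3
  ring

lemma gaussDensity_transpose_mul_self_inv {B : Matrix (Fin d) (Fin d) ℝ} (hB : IsUnit B.det)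
    (μ y : Fin d → ℝ) :
    gaussDensity d (Bᵀ * B)⁻¹ μ y = |B.det| * gaussDensity d 1 0 (B *ᵥ (y - μ)) := by
  have normalization :
      ((2 * π) ^ d * (Bᵀ * B)⁻¹.det) ^ (-(1 / 2) : ℝ) =
        |B.det| * ((2 * π) ^ d) ^ (-(1 / 2) : ℝ) := by
    have : (B.det * B.det)⁻¹ = (|B.det| ^ 2)⁻¹ := by rw [sq_abs, sq]
    rw [det_nonsing_inv, det_mul, det_transpose, Ring.inverse_eq_inv', this,
      mul_rpow (by positivity) (by positivity), rpow_neg (inv_nonneg.mpr (sq_nonneg _)),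
      inv_rpow (sq_nonneg _), inv_inv, ← sqrt_eq_rpow, sqrt_sq (abs_nonneg _), mul_comm]
  have hBB : IsUnit (Bᵀ * B).det := by simpa using hB
  simp only [gaussDensity, normalization, nonsing_inv_nonsing_inv _ hBB,
    dotProduct_transpose_mul_self_mulVec, det_one, inv_one, one_mulVec, sub_zero, mul_one,
    mul_assoc]

end GaussDensity

/-- The Gaussian law `N(μ, S)` on `ℝ^d`, given by its Lebesgue density, so that averages against a
Gaussian density become expectations. It is a probability measure when `S` is positive definite. -/
noncomputable def gaussMeasure (d : ℕ) (S : Matrix (Fin d) (Fin d) ℝ) (μ : Fin d → ℝ) :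
    Measure (Fin d → ℝ) :=
  volume.withDensity fun y => ENNReal.ofReal (gaussDensity d S μ y)

section GaussMeasure

variable {d : ℕ} {S : Matrix (Fin d) (Fin d) ℝ}

lemma gaussMeasure_one_zero :
    gaussMeasure d 1 0 = Measure.pi fun _ => ProbabilityTheory.gaussianReal 0 1 := by
  simp only [ProbabilityTheory.gaussianReal_of_var_ne_zero 0 one_ne_zero,
    ProbabilityTheory.gaussianPDF_def]
  rw [pi_withDensity_ofReal (fun _ => ProbabilityTheory.gaussianPDFReal_nonneg 0 1)
    fun _ => ProbabilityTheory.integrable_gaussianPDFReal 0 1]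
  simp only [gaussMeasure, gaussDensity_one_zero_eq_prod, volume_pi]

lemma measurePreserving_whitening {B : Matrix (Fin d) (Fin d) ℝ} (hB : IsUnit B.det)
    (μ : Fin d → ℝ) :
    MeasurePreserving (fun y => B *ᵥ (y - μ)) (gaussMeasure d (Bᵀ * B)⁻¹ μ)
      (gaussMeasure d 1 0) := by
  have measurable_whitening : Measurable fun y => B *ᵥ (y - μ) :=
    Continuous.measurable (by fun_prop)
  have measurable_std : Measurable fun x => ENNReal.ofReal (gaussDensity d 1 0 x) :=
    (continuous_gaussDensity 1 0).measurable.ennreal_ofReal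
  refine ⟨measurable_whitening, Measure.ext fun s hs => ?_⟩
  rw [Measure.map_apply measurable_whitening hs, gaussMeasure, gaussMeasure,
    withDensity_apply _ (measurable_whitening hs), withDensity_apply _ hs]
  simp only [gaussDensity_transpose_mul_self_inv hB, ENNReal.ofReal_mul (abs_nonneg _)]
  rw [lintegral_const_mul' _ _ ENNReal.ofReal_ne_top,
    ← setLIntegral_map hs measurable_std measurable_whitening, map_mulVec_sub_volume hB,
    Measure.restrict_smul, lintegral_smul_measure, smul_eq_mul, ← mul_assoc,
    ← ENNReal.ofReal_mul (abs_nonneg _), ← abs_mul, mul_inv_cancel₀ hB.ne_zero, abs_one,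
    ENNReal.ofReal_one, one_mul]

lemma exists_measurePreserving_whitening (hS : S.PosDef) (μ : Fin d → ℝ) :
    ∃ B : Matrix (Fin d) (Fin d) ℝ, S⁻¹ = Bᵀ * B ∧
      MeasurePreserving (fun y => B *ᵥ (y - μ)) (gaussMeasure d S μ)
        (Measure.pi fun _ => ProbabilityTheory.gaussianReal 0 1) := by
  obtain ⟨B, hB, rfl⟩ := exists_eq_transpose_mul_self_inv hS
  refine ⟨B, nonsing_inv_nonsing_inv _ (by simpa using hB), ?_⟩
  simpa only [gaussMeasure_one_zero] using measurePreserving_whitening hB μ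

lemma isProbabilityMeasure_gaussMeasure (hS : S.PosDef) (μ : Fin d → ℝ) :
    IsProbabilityMeasure (gaussMeasure d S μ) := by
  obtain ⟨B, -, hB⟩ := exists_measurePreserving_whitening hS μ
  rw [← Measure.isProbabilityMeasure_map_iff hB.aemeasurable, hB.map_eq]
  infer_instance

lemma integrable_gaussMeasure_iff (hS : 0 < S.det) (μ : Fin d → ℝ) {f : (Fin d → ℝ) → ℝ} :
    Integrable f (gaussMeasure d S μ) ↔ Integrable fun y => gaussDensity d S μ y * f y := by
  rw [gaussMeasure, integrable_withDensity_iff_integrable_smul'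
    (continuous_gaussDensity S μ).measurable.ennreal_ofReal (by simp)]
  simp only [ENNReal.toReal_ofReal (gaussDensity_pos hS μ _).le, smul_eq_mul]

lemma integral_gaussMeasure (hS : 0 < S.det) (μ : Fin d → ℝ) (f : (Fin d → ℝ) → ℝ) :
    ∫ y, f y ∂gaussMeasure d S μ = ∫ y, gaussDensity d S μ y * f y := by
  rw [gaussMeasure, integral_withDensity_eq_integral_toReal_smul
    (continuous_gaussDensity S μ).measurable.ennreal_ofReal (by simp)]
  simp only [ENNReal.toReal_ofReal (gaussDensity_pos hS μ _).le, smul_eq_mul]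

lemma integrable_gaussDensity (hS : S.PosDef) (μ : Fin d → ℝ) :
    Integrable (gaussDensity d S μ) := by
  have := isProbabilityMeasure_gaussMeasure hS μ
  simpa using (integrable_gaussMeasure_iff hS.det_pos μ).mp (integrable_const 1)

lemma integral_gaussDensity (hS : S.PosDef) (μ : Fin d → ℝ) :
    ∫ y, gaussDensity d S μ y = 1 := by
  have := isProbabilityMeasure_gaussMeasure hS μ
  simpa using (integral_gaussMeasure hS.det_pos μ fun _ => 1).symm

lemma integrable_gaussDensity_gaussMeasure (hS : S.PosDef) (a b : Fin d → ℝ) :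
    Integrable (gaussDensity d S b) (gaussMeasure d S a) := by
  rw [integrable_gaussMeasure_iff hS.det_pos]
  simp only [gaussDensity_mul_gaussDensity hS.det_pos]
  exact (integrable_gaussDensity (hS.smul (by norm_num)) _).const_mul _

lemma integral_gaussDensity_gaussMeasure (hS : S.PosDef) (a b : Fin d → ℝ) :
    ∫ y, gaussDensity d S b y ∂gaussMeasure d S a = gaussDensity d ((2 : ℝ) • S) b a := by
  rw [integral_gaussMeasure hS.det_pos]
  simp only [gaussDensity_mul_gaussDensity hS.det_pos]
  rw [integral_const_mul, integral_gaussDensity (hS.smul (by norm_num)), mul_one]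

lemma integrable_quadraticForm_gaussMeasure (hS : S.PosDef) (a b : Fin d → ℝ) :
    Integrable (fun y => (y - b) ⬝ᵥ (S⁻¹ *ᵥ (y - b))) (gaussMeasure d S a) := by
  obtain ⟨B, hSB, hB⟩ := exists_measurePreserving_whitening hS a
  have recenter : (fun y => (B *ᵥ (y - b)) ⬝ᵥ (B *ᵥ (y - b))) =
      (fun x => (x + B *ᵥ (a - b)) ⬝ᵥ (x + B *ᵥ (a - b))) ∘ fun y => B *ᵥ (y - a) := by
    funext y
    simp only [Function.comp_apply, ← mulVec_add, sub_add_sub_cancel]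
  simp only [hSB, dotProduct_transpose_mul_self_mulVec]
  rw [recenter]
  exact hB.integrable_comp_of_integrable
    (integrable_dotProduct_add_const_pi_gaussianReal (B *ᵥ (a - b)))

lemma integral_quadraticForm_gaussMeasure (hS : S.PosDef) (μ : Fin d → ℝ) :
    ∫ y, (y - μ) ⬝ᵥ (S⁻¹ *ᵥ (y - μ)) ∂gaussMeasure d S μ = d := by
  obtain ⟨B, hSB, hB⟩ := exists_measurePreserving_whitening hS μ
  simp only [hSB, dotProduct_transpose_mul_self_mulVec]
  rw [← integral_map (φ := fun y => B *ᵥ (y - μ)) (f := fun x => x ⬝ᵥ x) hB.aemeasurable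
    (Continuous.aestronglyMeasurable (by fun_prop)), hB.map_eq,
    integral_dotProduct_self_pi_gaussianReal, Fintype.card_fin]

lemma integrable_log_gaussDensity (hS : S.PosDef) (a b : Fin d → ℝ) :
    Integrable (fun y => log (gaussDensity d S b y)) (gaussMeasure d S a) := by
  have := isProbabilityMeasure_gaussMeasure hS a
  simp only [log_gaussDensity hS.det_pos]
  exact ((integrable_const _).add (integrable_quadraticForm_gaussMeasure hS a b)).const_mul _

lemma integral_log_gaussDensity (hS : S.PosDef) (μ : Fin d → ℝ) :
    ∫ y, log (gaussDensity d S μ y) ∂gaussMeasure d S μ =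
      -(1 / 2) * (log ((2 * π) ^ d * S.det) + d) := by
  have := isProbabilityMeasure_gaussMeasure hS μ
  simp only [log_gaussDensity hS.det_pos]
  rw [integral_const_mul,
    integral_add (integrable_const _) (integrable_quadraticForm_gaussMeasure hS μ μ),
    integral_quadraticForm_gaussMeasure hS, integral_const, probReal_univ, one_smul]

end GaussMeasure

/-- The density `m` of a mixture of Gaussians with common covariance `S`, means `μ l` and
weights `α l`. The weights are arbitrary reals, so the total mass need not be `1`. -/
noncomputable def gaussMixture {ι : Type*} [Fintype ι] (d : ℕ) (S : Matrix (Fin d) (Fin d) ℝ)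
    (μ : ι → Fin d → ℝ) (α : ι → ℝ) (y : Fin d → ℝ) : ℝ :=
  ∑ l, α l * gaussDensity d S (μ l) y

section GaussMixture

variable {d : ℕ} {S : Matrix (Fin d) (Fin d) ℝ} {ι : Type*} [Fintype ι] {α : ι → ℝ}

lemma integrable_gaussMixture (hS : S.PosDef) (a : Fin d → ℝ) (μ : ι → Fin d → ℝ) (α : ι → ℝ) :
    Integrable (gaussMixture d S μ α) (gaussMeasure d S a) :=
  integrable_finsetSum _ fun l _ => (integrable_gaussDensity_gaussMeasure hS a (μ l)).const_mul _

lemma integral_gaussMixture (hS : S.PosDef) (a : Fin d → ℝ) (μ : ι → Fin d → ℝ) (α : ι → ℝ) :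
    ∫ y, gaussMixture d S μ α y ∂gaussMeasure d S a = gaussMixture d ((2 : ℝ) • S) μ α a := by
  unfold gaussMixture
  rw [integral_finsetSum _ fun l _ => (integrable_gaussDensity_gaussMeasure hS a (μ l)).const_mul _]
  simp only [integral_const_mul, integral_gaussDensity_gaussMeasure hS]

lemma mul_gaussDensity_le_gaussMixture (hS : 0 < S.det) (μ : ι → Fin d → ℝ)
    (hα : ∀ l, 0 ≤ α l) (k : ι) (y : Fin d → ℝ) :
    α k * gaussDensity d S (μ k) y ≤ gaussMixture d S μ α y :=
  Finset.single_le_sum (f := fun l => α l * gaussDensity d S (μ l) y)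
    (fun l _ => mul_nonneg (hα l) (gaussDensity_pos hS _ _).le) (Finset.mem_univ k)

lemma gaussMixture_pos (hS : 0 < S.det) (μ : ι → Fin d → ℝ) (hα : ∀ l, 0 ≤ α l) {k : ι}
    (hk : 0 < α k) (y : Fin d → ℝ) : 0 < gaussMixture d S μ α y :=
  (mul_pos hk (gaussDensity_pos hS _ _)).trans_le (mul_gaussDensity_le_gaussMixture hS μ hα k y)

lemma integrable_log_gaussMixture (hS : S.PosDef) (a : Fin d → ℝ) (μ : ι → Fin d → ℝ)
    (hα : ∀ l, 0 ≤ α l) {k : ι} (hk : 0 < α k) :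
    Integrable (fun y => log (gaussMixture d S μ α y)) (gaussMeasure d S a) := by
  have := isProbabilityMeasure_gaussMeasure hS a
  refine integrable_log_of_le (g := fun y => α k * gaussDensity d S (μ k) y)
    (ae_of_all _ fun y => mul_pos hk (gaussDensity_pos hS.det_pos _ _))
    (ae_of_all _ (mul_gaussDensity_le_gaussMixture hS.det_pos μ hα k))
    (integrable_gaussMixture hS a μ α) ?_
  simp only [log_mul hk.ne' (gaussDensity_pos hS.det_pos _ _).ne']
  exact (integrable_const _).add (integrable_log_gaussDensity hS a (μ k))

theorem gauss_mixture_kl_lower_bound_general (hS : S.PosDef) (a : Fin d → ℝ) (μ : ι → Fin d → ℝ)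
    (hα_nonneg : ∀ l, 0 ≤ α l) (hα_sum : 0 < ∑ l, α l) :
    -(1 / 2) * (log ((2 * π) ^ d * S.det) + d) - log (gaussMixture d ((2 : ℝ) • S) μ α a) ≤
      ∫ y, gaussDensity d S a y * log (gaussDensity d S a y / gaussMixture d S μ α y) := by
  have := isProbabilityMeasure_gaussMeasure hS a
  obtain ⟨k, -, hk⟩ := (Finset.sum_pos_iff_of_nonneg fun l _ => hα_nonneg l).mp hα_sum
  have hm_pos := gaussMixture_pos hS.det_pos μ hα_nonneg hk
  have hm_log := integrable_log_gaussMixture hS a μ hα_nonneg hk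
  rw [← integral_log_gaussDensity hS a, ← integral_gaussMixture hS a μ α,
    ← integral_gaussMeasure hS.det_pos]
  simp only [log_div (gaussDensity_pos hS.det_pos _ _).ne' (hm_pos _).ne']
  rw [integral_sub (integrable_log_gaussDensity hS a a) hm_log]
  gcongr
  exact integral_log_le_log_integral (ae_of_all _ hm_pos) (integrable_gaussMixture hS a μ α) hm_log

end GaussMixture

/-- The KL divergence of a Gaussian component from a Gaussian mixture with
common covariance is bounded below by the closed-form approximation
`c − ln(Σ_l α_l Z_{i,l})` used in the expected information gain. -/
theorem gauss_mixture_kl_lower_bound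
    (d N : ℕ) (hd : 1 ≤ d) (S : Matrix (Fin d) (Fin d) ℝ) (hS : S.PosDef)
    (μ : Fin N → (Fin d → ℝ))
    (α : Fin N → ℝ) (hα_nonneg : ∀ l, 0 ≤ α l) (hα_sum : ∑ l, α l = 1)
    (m : (Fin d → ℝ) → ℝ)
    (hm : ∀ y, m y = ∑ l, α l * gaussDensity d S (μ l) y)
    (c : ℝ) (hc : c = -(1/2) * (Real.log ((2 * π) ^ d * S.det) + d))
    (Z : Fin N → Fin N → ℝ)
    (hZ : ∀ i l, Z i l = ((2 * π) ^ d * ((2 : ℝ) • S).det) ^ (-(1/2) : ℝ) *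
      Real.exp (-(1/2) * ((μ i - μ l) ⬝ᵥ (((2 : ℝ) • S)⁻¹ *ᵥ (μ i - μ l)))))
    (i : Fin N) :
    ∫ y, gaussDensity d S (μ i) y * Real.log (gaussDensity d S (μ i) y / m y)
      ≥ c - Real.log (∑ l, α l * Z i l) := by
  simp only [hm, hc, hZ]
  exact gauss_mixture_kl_lower_bound_general hS (μ i) μ hα_nonneg (by simp [hα_sum])
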